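/- Let G be a finite group, let p_1, …, p_l be the prime divisors of |G|, let n ≥ 1 be an integer, and let D_n be the greatest common divisor of p_1^n − 1, …, p_l^n − 1. Then k_{n−1}(G) ≡ |G|^{n−1} (mod D_n), where k_{n−1}(G) is the number of conjugacy classes of commuting (n−1)-tuples in G (with the convention k_0(G) = 1). -/

import Mathlib

/-- Commuting `m`-tuples of elements of `G`. -/
abbrev CommutingTuple (G : Type*) [Group G] (m : ℕ) : Type _ :=
  {f : Fin m → G // ∀ i j, Commute (f i) (f j)}

namespace CommutingTuple

open Finset

variable {G : Type*} [Group G] {n D : ℕ}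

/-- `G` acts on commuting tuples by simultaneous conjugation. -/
@[reducible]
def conjAction (G : Type*) [Group G] (m : ℕ) : MulAction G (CommutingTuple G m) where
  smul g t := ⟨fun i => g * t.1 i * g⁻¹, fun i j => by
    have h := (t.2 i j).eq
    rw [commute_iff_eq]
    calc g * t.1 i * g⁻¹ * (g * t.1 j * g⁻¹) = g * (t.1 i * t.1 j) * g⁻¹ := by group
      _ = g * (t.1 j * t.1 i) * g⁻¹ := by rw [h]
      _ = g * t.1 j * g⁻¹ * (g * t.1 i * g⁻¹) := by group⟩
  one_smul t := Subtype.ext <| funext fun i => show 1 * t.1 i * 1⁻¹ = t.1 i by group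
  mul_smul g h t := Subtype.ext <| funext fun i =>
    show g * h * t.1 i * (g * h)⁻¹ = g * (h * t.1 i * h⁻¹) * g⁻¹ by group

/-- A commuting `(m + 1)`-tuple is a group element together with a commuting `m`-tuple that it
fixes under conjugation. -/
def sigmaFixedByEquiv (G : Type*) [Group G] (m : ℕ) :
    letI := conjAction G m
    (Σ g : G, MulAction.fixedBy (CommutingTuple G m) g) ≃ CommutingTuple G (m + 1) :=
  letI := conjAction G m
  { toFun := fun x => ⟨Fin.cons x.1 x.2.1.1, by
      have h : ∀ i, Commute x.1 (x.2.1.1 i) := fun i =>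
        mul_inv_eq_iff_eq_mul.mp (congrFun (congrArg Subtype.val x.2.2) i)
      intro i j
      refine Fin.cases ?_ (fun i => ?_) i <;> refine Fin.cases ?_ (fun j => ?_) j
      · exact Commute.refl _
      · exact h j
      · exact (h i).symm
      · exact x.2.1.2 i j⟩
    invFun := fun t => ⟨t.1 0, ⟨fun i => t.1 i.succ, fun i j => t.2 _ _⟩,
      Subtype.ext <| funext fun i => mul_inv_eq_iff_eq_mul.mpr (t.2 0 i.succ).eq⟩
    left_inv := fun _ => rfl
    right_inv := fun t => Subtype.ext (Fin.cons_self_tail t.1) }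

theorem card_conjClasses_mul_card (G : Type*) [Group G] (m : ℕ) :
    Nat.card (Quot fun t t' : CommutingTuple G m => ∃ g : G, ∀ i, t'.1 i = g * t.1 i * g⁻¹) *
      Nat.card G = Nat.card (CommutingTuple G (m + 1)) := by
  let := conjAction G m
  have e : (Quot fun t t' : CommutingTuple G m => ∃ g : G, ∀ i, t'.1 i = g * t.1 i * g⁻¹) ≃
      Quotient (MulAction.orbitRel G (CommutingTuple G m)) :=
    Quot.congrRight fun t t' => by
      refine Iff.trans ?_ (MulAction.orbitRel G (CommutingTuple G m)).comm'
      refine exists_congr fun g => ?_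
      exact ⟨fun h => Subtype.ext (funext fun i => (h i).symm),
        fun h i => (congrFun (congrArg Subtype.val h) i).symm⟩
  rw [Nat.card_congr e, ← Nat.card_prod,
    ← Nat.card_congr (MulAction.sigmaFixedByEquivOrbitsProdGroup G (CommutingTuple G m)),
    Nat.card_congr (sigmaFixedByEquiv G m)]

open Classical in
/-- The commuting `n`-tuples that generate the subgroup `H`. -/
noncomputable def generating [Fintype G] (n : ℕ) (H : Subgroup G) : Finset (CommutingTuple G n) :=
  {t | Subgroup.closure (Set.range t.1) = H}

open Classical in
/-- The commuting `n`-tuples with entries in the subgroup `H`. -/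
noncomputable def within [Fintype G] (n : ℕ) (H : Subgroup G) : Finset (CommutingTuple G n) :=
  {t | Subgroup.closure (Set.range t.1) ≤ H}

variable [Fintype G]

open Classical in
theorem card_within_eq_sum (n : ℕ) (H : Subgroup G) :
    #(within n H) = ∑ K : Subgroup G with K ≤ H, #(generating n K) := by
  rw [card_eq_sum_card_fiberwise (f := fun t => Subgroup.closure (Set.range t.1))
    (t := {K : Subgroup G | K ≤ H}) (fun t ht => by simpa [within] using ht)]
  refine sum_congr rfl fun K hK => congrArg card ?_
  ext t
  simp only [within, generating, mem_filter, mem_univ, true_and] at hK ⊢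
  exact ⟨fun h => h.2, fun h => ⟨h.le.trans hK, h⟩⟩

theorem card_generating_bot (n : ℕ) : #(generating n (⊥ : Subgroup G)) = 1 := by
  rw [card_eq_one]
  refine ⟨⟨fun _ => 1, fun _ _ => Commute.refl _⟩, ?_⟩
  ext t
  simp [generating, Subgroup.closure_eq_bot_iff, Subtype.ext_iff, funext_iff]

theorem card_within_of_commute (n : ℕ) {H : Subgroup G} (hH : ∀ a ∈ H, ∀ b ∈ H, Commute a b) :
    #(within n H) = Nat.card H ^ n := by
  have e : {t // t ∈ within n H} ≃ (Fin n → H) :=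
    { toFun := fun t i => ⟨t.1.1 i, by
        have h := t.2
        simp only [within, mem_filter, mem_univ, true_and] at h
        exact h (Subgroup.subset_closure ⟨i, rfl⟩)⟩
      invFun := fun f => ⟨⟨fun i => f i, fun i j => hH _ (f i).2 _ (f j).2⟩, by
        simp [within, Subgroup.closure_le, Set.range_subset_iff]⟩
      left_inv := fun _ => rfl
      right_inv := fun _ => rfl }
  rw [← Nat.card_eq_finsetCard, Nat.card_congr e, Nat.card_fun, Nat.card_fin]

theorem pow_modEq_one_of_dvd {N : ℕ} (hN : N ≠ 0)
    (hD : ∀ p, p.Prime → p ∣ N → p ^ n ≡ 1 [MOD D]) {d : ℕ} (hd : d ∣ N) :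
    d ^ n ≡ 1 [MOD D] := by
  induction d using Nat.recOnMul with
  | zero => exact absurd (zero_dvd_iff.mp hd) hN
  | one => rw [one_pow]
  | prime p hp => exact hD p hp hd
  | mul a b iha ihb =>
    rw [mul_pow]
    exact (iha (dvd_of_mul_right_dvd hd)).mul (ihb (dvd_of_mul_left_dvd hd))

theorem commute_of_mem_generating {H : Subgroup G} {t : CommutingTuple G n}
    (ht : t ∈ generating n H) : ∀ a ∈ H, ∀ b ∈ H, Commute a b := by
  simp only [generating, mem_filter, mem_univ, true_and] at ht
  subst ht
  have hc : ∀ x ∈ Set.range t.1, ∀ y ∈ Set.range t.1, x * y = y * x := by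
    rintro _ ⟨i, rfl⟩ _ ⟨j, rfl⟩
    exact t.2 i j
  intro a ha b hb
  exact congrArg Subtype.val ((Subgroup.isMulCommutative_closure hc).is_comm.comm ⟨a, ha⟩ ⟨b, hb⟩)

theorem card_generating_modEq_zero (hD : ∀ p, p.Prime → p ∣ Nat.card G → p ^ n ≡ 1 [MOD D])
    (H : Subgroup G) (hH : H ≠ ⊥) : #(generating n H) ≡ 0 [MOD D] := by
  classical
  induction H using WellFoundedLT.induction with
  | ind H ih =>
  rcases (generating n H).eq_empty_or_nonempty with h | ⟨t, ht⟩
  · rw [h, card_empty]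
  have hsum := card_within_eq_sum n H
  rw [card_within_of_commute n (commute_of_mem_generating ht),
    ← add_sum_erase (a := H) _ _ (by simp),
    ← add_sum_erase (a := ⊥) _ _ (by simp [hH.symm]), card_generating_bot] at hsum
  have hrest : ∑ K ∈ (({K : Subgroup G | K ≤ H} : Finset _).erase H).erase ⊥, #(generating n K)
      ≡ 0 [MOD D] := by
    rw [Nat.modEq_zero_iff_dvd]
    refine dvd_sum fun K hK => ?_
    simp only [mem_erase, mem_filter, mem_univ, true_and] at hK
    exact Nat.modEq_zero_iff_dvd.mp (ih K (lt_of_le_of_ne hK.2.2 hK.2.1) hK.1)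
  have hpow := pow_modEq_one_of_dvd Nat.card_pos.ne' hD (Subgroup.card_subgroup_dvd_card H)
  rw [hsum] at hpow
  have := ((Nat.ModEq.refl #(generating n H)).add (hrest.add_left 1)).symm.trans hpow
  exact Nat.ModEq.add_right_cancel' 1 (by simpa using this)

theorem card_modEq_one (hD : ∀ p, p.Prime → p ∣ Nat.card G → p ^ n ≡ 1 [MOD D]) :
    Nat.card (CommutingTuple G n) ≡ 1 [MOD D] := by
  classical
  have h : Nat.card (CommutingTuple G n) = #(within n (⊤ : Subgroup G)) := by
    simp [within, Nat.card_eq_fintype_card]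
  rw [h, card_within_eq_sum, ← add_sum_erase (a := ⊥) _ _ (by simp), card_generating_bot]
  refine Nat.ModEq.add (Nat.ModEq.refl 1) (Nat.modEq_zero_iff_dvd.mpr (dvd_sum fun K hK => ?_))
  exact Nat.modEq_zero_iff_dvd.mp (card_generating_modEq_zero hD K (mem_erase.mp hK).1)

end CommutingTuple

/-- Let `G` be a finite group with prime divisors `p_1, …, p_l`, let
`n ≥ 1`, and let `D_n = gcd(p_1^n − 1, …, p_l^n − 1)`.  Then
`k_{n-1}(G) ≡ |G|^{n-1} (mod D_n)`, where `k_{n-1}(G)` is the number of conjugacy classes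
of commuting `(n-1)`-tuples in `G` (for `n = 1` the empty tuple gives `k_0(G) = 1`). -/
theorem stmt_19 {G : Type*} [Group G] [Fintype G] (n : ℕ) (hn : 1 ≤ n)
    (D : ℕ) (hD : D = Finset.gcd (Nat.card G).primeFactors (fun p => p ^ n - 1)) :
    (Nat.card (Quot (fun t t' : {f : Fin (n - 1) → G // ∀ i j, Commute (f i) (f j)} =>
        ∃ g : G, ∀ i, (t' : Fin (n - 1) → G) i = g * (t : Fin (n - 1) → G) i * g⁻¹)) : ℤ)
      ≡ (Nat.card G : ℤ) ^ (n - 1) [ZMOD (D : ℤ)] := by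
  obtain ⟨m, rfl⟩ := Nat.exists_eq_add_of_le' hn
  have hpD : ∀ p, p.Prime → p ∣ Nat.card G → p ^ (m + 1) ≡ 1 [MOD D] := fun p hp hpG =>
    ((Nat.modEq_iff_dvd' (Nat.one_le_pow _ _ hp.pos)).mpr
      (hD ▸ Finset.gcd_dvd (Nat.mem_primeFactors.mpr ⟨hp, hpG, Nat.card_pos.ne'⟩))).symm
  have hG := CommutingTuple.pow_modEq_one_of_dvd Nat.card_pos.ne' hpD dvd_rfl
  have hk := CommutingTuple.card_modEq_one hpD
  rw [← CommutingTuple.card_conjClasses_mul_card] at hk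
  rw [← Nat.cast_pow, Int.natCast_modEq_iff, Nat.add_sub_cancel]
  set k := Nat.card (Quot fun t t' : CommutingTuple G m =>
    ∃ g : G, ∀ i, t'.1 i = g * t.1 i * g⁻¹)
  calc k = k * 1 := (mul_one k).symm
    _ ≡ k * Nat.card G ^ (m + 1) [MOD D] := hG.symm.mul_left k
    _ = k * Nat.card G * Nat.card G ^ m := by ring
    _ ≡ 1 * Nat.card G ^ m [MOD D] := hk.mul_right _
    _ = Nat.card G ^ m := one_mul _
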